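/- Let d ≥ 1 be an integer and let ψ : ℤ^d → ℝ be a nonnegative function. Suppose there are constants c ∈ (0,1], D > 0 and γ ≥ 0 such that: (i) every nonzero value of ψ lies in some interval [cj, j/c] with j a positive integer, i.e. for every k ∈ ℤ^d with ψ(k) > 0 there is an integer j ≥ 1 with cj ≤ ψ(k) ≤ j/c; and (ii) for every integer j ≥ 1 the set {k ∈ ℤ^d : cj ≤ ψ(k) ≤ j/c} is finite with cardinality at most D·j^γ. Then there exists a constant C > 0, depending only on c, D and γ, such that for every t > 0 the family (e^{−tψ(k)})_{k∈ℤ^d, ψ(k)>0} is summable and Σ_{k∈ℤ^d, ψ(k)>0} e^{−tψ(k)} ≤ C · t^{−(γ+1)}. -/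

import Mathlib

theorem aux_rpow (γ : ℝ) (hγ : 0 ≤ γ) :
    ∃ K : ℝ, 0 < K ∧ ∀ x : ℝ, 0 ≤ x → x ^ γ ≤ K * Real.exp (x / 2) := by
  refine ⟨1 + 2 ^ ⌈γ⌉₊ * (⌈γ⌉₊.factorial : ℝ), by positivity, ?_⟩
  intro x hx
  have h1 : x ^ γ ≤ 1 + x ^ ⌈γ⌉₊ := by
    rcases le_total x 1 with h | h
    · have := Real.rpow_le_one hx h hγ
      have : 0 ≤ x ^ ⌈γ⌉₊ := by positivity
      linarith
    · have := Real.rpow_le_rpow_of_exponent_le h (Nat.le_ceil γ)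
      rw [Real.rpow_natCast] at this
      linarith
  have h2 := Real.pow_div_factorial_le_exp (x / 2) (by positivity) ⌈γ⌉₊
  have h3 : x ^ ⌈γ⌉₊ ≤ 2 ^ ⌈γ⌉₊ * (⌈γ⌉₊.factorial : ℝ) * Real.exp (x / 2) := by
    calc x ^ ⌈γ⌉₊ = 2 ^ ⌈γ⌉₊ * (⌈γ⌉₊.factorial : ℝ) *
          ((x / 2) ^ ⌈γ⌉₊ / (⌈γ⌉₊.factorial : ℝ)) := by
          rw [div_pow]; field_simp
      _ ≤ _ := by gcongr
  have h4 : 1 ≤ Real.exp (x / 2) := Real.one_le_exp (by positivity)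
  linarith

theorem aux_geom (s : ℝ) (hs : 0 < s) (F : Finset ℕ) :
    ∑ j ∈ F, Real.exp (-(s * ((j : ℝ) + 1) / 2)) ≤ 2 / s := by
  have hr0 : 0 ≤ Real.exp (-(s / 2)) := (Real.exp_pos _).le
  have hr1 : Real.exp (-(s / 2)) < 1 := by rw [← Real.exp_zero]; exact Real.exp_lt_exp.2 (by linarith)
  have hg := (hasSum_geometric_of_lt_one hr0 hr1).mul_left (Real.exp (-(s / 2)))
  have h1 : ∑ j ∈ F, Real.exp (-(s * ((j : ℝ) + 1) / 2)) =
      ∑ j ∈ F, Real.exp (-(s / 2)) * Real.exp (-(s / 2)) ^ j := by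
    refine Finset.sum_congr rfl fun j _ => ?_
    rw [← Real.exp_nat_mul, ← Real.exp_add]
    congr 1; ring
  rw [h1]
  refine (sum_le_hasSum F (fun j _ => by positivity) hg).trans ?_
  rw [← div_eq_mul_inv, div_le_div_iff₀ (by linarith) hs]
  have h2 := Real.add_one_le_exp (s / 2)
  have h3 : Real.exp (-(s / 2)) * Real.exp (s / 2) = 1 := by
    rw [← Real.exp_add]; simp
  nlinarith

/-- Let `ψ : ℤ^d → ℝ` be nonnegative, and suppose there are constants `c ∈ (0,1]`, `D > 0`,
`γ ≥ 0` such that every nonzero value of `ψ` lies in some interval `[cj, j/c]` with `j ≥ 1` an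
integer, and for every integer `j ≥ 1` the set `{k : cj ≤ ψ(k) ≤ j/c}` is finite of cardinality
at most `D·j^γ`.  Then there is a constant `C > 0`, depending only on `c`, `D` and `γ`, such
that for every `t > 0` the family `(e^{−tψ(k)})_{ψ(k)>0}` is summable with sum at most
`C · t^{−(γ+1)}`. -/
theorem stmt_6 (c D γ : ℝ) (hc0 : 0 < c) (hc1 : c ≤ 1) (hD : 0 < D) (hγ : 0 ≤ γ) :
    ∃ C : ℝ, 0 < C ∧
      ∀ (d : ℕ), 1 ≤ d → ∀ ψ : (Fin d → ℤ) → ℝ,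
        (∀ k, 0 ≤ ψ k) →
        (∀ k, 0 < ψ k → ∃ j : ℕ, 1 ≤ j ∧ c * (j : ℝ) ≤ ψ k ∧ ψ k ≤ (j : ℝ) / c) →
        (∀ j : ℕ, 1 ≤ j →
          {k : Fin d → ℤ | c * (j : ℝ) ≤ ψ k ∧ ψ k ≤ (j : ℝ) / c}.Finite ∧
            (({k : Fin d → ℤ | c * (j : ℝ) ≤ ψ k ∧ ψ k ≤ (j : ℝ) / c}.ncard : ℝ) ≤
              D * (j : ℝ) ^ γ)) →
        ∀ t : ℝ, 0 < t →
          Summable (fun k : {k : Fin d → ℤ // 0 < ψ k} => Real.exp (-(t * ψ k))) ∧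
          (∑' k : {k : Fin d → ℤ // 0 < ψ k}, Real.exp (-(t * ψ k))) ≤ C * t ^ (-(γ + 1)) := by
  obtain ⟨K, hK, hKx⟩ := aux_rpow γ hγ
  refine ⟨D * K * 2 * c ^ (-(γ + 1)), by positivity, ?_⟩
  intro d _ ψ _ hcov hcard t ht
  have hs : 0 < t * c := by positivity
  have key : ∀ u : Finset {k : Fin d → ℤ // 0 < ψ k},
      ∑ k ∈ u, Real.exp (-(t * ψ k)) ≤ D * K * 2 * c ^ (-(γ + 1)) * t ^ (-(γ + 1)) := by
    intro u
    have hJ : ∀ k : {k : Fin d → ℤ // 0 < ψ k}, ∃ j : ℕ,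
        c * ((j : ℝ) + 1) ≤ ψ k ∧ ψ k ≤ ((j : ℝ) + 1) / c := by
      intro k
      obtain ⟨j, hj, h1, h2⟩ := hcov k k.2
      refine ⟨j - 1, ?_⟩
      have : ((j - 1 : ℕ) : ℝ) + 1 = j := by
        rw [Nat.cast_sub hj]; simp
      rw [this]
      exact ⟨h1, h2⟩
    choose J hJ1 hJ2 using hJ
    have hterm : ∀ j : ℕ, (∑ k ∈ u with J k = j, Real.exp (-(t * ψ k))) ≤
        D * K * (t * c) ^ (-γ) * Real.exp (-(t * c * ((j : ℝ) + 1) / 2)) := by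
      intro j
      obtain ⟨hfin, hn⟩ := hcard (j + 1) (by omega)
      push_cast at hfin hn
      have hj0 : (0 : ℝ) < (j : ℝ) + 1 := by positivity
      have hc : (((u.filter fun k => J k = j).card : ℕ) : ℝ) ≤ D * ((j : ℝ) + 1) ^ γ := by
        refine le_trans ?_ hn
        rw [← Finset.card_map (Function.Embedding.subtype _), ← Set.ncard_coe_finset]
        refine Nat.cast_le.2 (Set.ncard_le_ncard ?_ hfin)
        intro k hk
        simp only [Finset.coe_map, Set.mem_image, Finset.mem_coe, Finset.mem_filter] at hk
        obtain ⟨k', ⟨_, rfl⟩, rfl⟩ := hk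
        have h1 := hJ1 k'
        have h2 := hJ2 k'
        simp only [Set.mem_setOf_eq, Function.Embedding.subtype_apply]
        exact ⟨h1, h2⟩
      have hx := hKx (t * c * ((j : ℝ) + 1)) (by positivity)
      rw [Real.mul_rpow hs.le hj0.le] at hx
      have hp : 0 < (t * c) ^ γ := by positivity
      have hx2 : ((j : ℝ) + 1) ^ γ ≤
          K * (t * c) ^ (-γ) * Real.exp (t * c * ((j : ℝ) + 1) / 2) := by
        rw [Real.rpow_neg hs.le]
        calc ((j : ℝ) + 1) ^ γ = ((t * c) ^ γ)⁻¹ * ((t * c) ^ γ * ((j : ℝ) + 1) ^ γ) := by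
              field_simp
          _ ≤ ((t * c) ^ γ)⁻¹ * (K * Real.exp (t * c * ((j : ℝ) + 1) / 2)) := by gcongr
          _ = _ := by ring
      calc (∑ k ∈ u with J k = j, Real.exp (-(t * ψ k)))
          ≤ ∑ k ∈ u with J k = j, Real.exp (-(t * c * ((j : ℝ) + 1))) := by
            refine Finset.sum_le_sum fun k hk => ?_
            obtain ⟨_, rfl⟩ := Finset.mem_filter.1 hk
            rw [mul_assoc]
            have := hJ1 k
            gcongr
        _ = ((u.filter fun k => J k = j).card : ℝ) * Real.exp (-(t * c * ((j : ℝ) + 1))) := by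
            rw [Finset.sum_const, nsmul_eq_mul]
        _ ≤ (D * (K * (t * c) ^ (-γ) * Real.exp (t * c * ((j : ℝ) + 1) / 2))) *
            Real.exp (-(t * c * ((j : ℝ) + 1))) := by
            gcongr
            exact hc.trans (by gcongr)
        _ = D * K * (t * c) ^ (-γ) * (Real.exp (t * c * ((j : ℝ) + 1) / 2) *
            Real.exp (-(t * c * ((j : ℝ) + 1)))) := by ring
        _ = _ := by
            rw [← Real.exp_add]
            congr 2; ring
    calc ∑ k ∈ u, Real.exp (-(t * ψ k))
        = ∑ j ∈ u.image J, ∑ k ∈ u with J k = j, Real.exp (-(t * ψ k)) :=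
          (Finset.sum_fiberwise_of_maps_to
            (fun k hk => Finset.mem_image_of_mem J hk) _).symm
      _ ≤ ∑ j ∈ u.image J,
          D * K * (t * c) ^ (-γ) * Real.exp (-(t * c * ((j : ℝ) + 1) / 2)) :=
          Finset.sum_le_sum fun j _ => hterm j
      _ = D * K * (t * c) ^ (-γ) *
          ∑ j ∈ u.image J, Real.exp (-(t * c * ((j : ℝ) + 1) / 2)) := by
          rw [Finset.mul_sum]
      _ ≤ D * K * (t * c) ^ (-γ) * (2 / (t * c)) := by
          gcongr
          exact aux_geom _ hs _
      _ = D * K * 2 * (t * c) ^ (-(γ + 1)) := by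
          rw [neg_add, Real.rpow_add hs, Real.rpow_neg_one]
          ring
      _ = _ := by
          rw [Real.mul_rpow ht.le hc0.le]
          ring
  exact ⟨summable_of_sum_le (fun k => (Real.exp_pos _).le) key,
    Real.tsum_le_of_sum_le (fun k => (Real.exp_pos _).le) key⟩
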